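/- arXiv:1901.04861 — 2 statements merged into one kernel-verified Lean document; each statement's English description precedes it below -/
import Mathlib

section
/- (Lemma C.2(i), Kolmogorov–Smirnov conditional moment inequality functional, first order degeneracy.) Let F be a nonempty compact metric space. For a pair θ = (θ⁽¹⁾, θ⁽²⁾) of bounded real-valued functions on F define φ(θ) = sup_{f ∈ F} { max{θ⁽¹⁾(f), 0}² + θ⁽²⁾(f)² }. Suppose θ⁽¹⁾(f) ≤ 0 for all f ∈ F and θ⁽²⁾ ≡ 0, so that φ(θ) = 0. Then for every sequence t_n ↓ 0 and every sequence of pairs h_n = (h_n⁽¹⁾, h_n⁽²⁾) of bounded functions on F converging in supremum norm (coordinatewise) to a pair h of bounded functions, one has φ(θ + t_n h_n)/t_n → 0; that is, φ is Hadamard directionally differentiable at θ with identically zero derivative. -/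
open Filter Topology

/-- Lemma C.2(i): the Kolmogorov–Smirnov conditional moment inequality functional
`φ(θ) = sup_{f∈F} { max{θ⁽¹⁾(f),0}² + θ⁽²⁾(f)² }` is Hadamard directionally differentiable
with identically zero derivative at any `θ = (θ⁽¹⁾, 0)` with `θ⁽¹⁾ ≤ 0`:
`φ(θ + t_n h_n)/t_n → 0`. -/
theorem ks_cmi_first_order_degeneracy
    (F : Type*) [MetricSpace F] [CompactSpace F] [Nonempty F]
    (θ1 : F → ℝ) (hθ1b : ∃ C, ∀ f, |θ1 f| ≤ C) (hθ1np : ∀ f, θ1 f ≤ 0)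
    (t : ℕ → ℝ) (ht : ∀ n, 0 < t n) (htlim : Tendsto t atTop (𝓝 0))
    (h1 h2 : ℕ → F → ℝ) (hl1 hl2 : F → ℝ)
    (hh1b : ∀ n, ∃ C, ∀ f, |h1 n f| ≤ C) (hh2b : ∀ n, ∃ C, ∀ f, |h2 n f| ≤ C)
    (hl1b : ∃ C, ∀ f, |hl1 f| ≤ C) (hl2b : ∃ C, ∀ f, |hl2 f| ≤ C)
    (hconv1 : ∀ ε > (0 : ℝ), ∀ᶠ n in atTop, ∀ f, |h1 n f - hl1 f| ≤ ε)
    (hconv2 : ∀ ε > (0 : ℝ), ∀ᶠ n in atTop, ∀ f, |h2 n f - hl2 f| ≤ ε) :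
    Tendsto (fun n =>
        (⨆ f : F, ((max (θ1 f + t n * h1 n f) 0) ^ 2 + (t n * h2 n f) ^ 2)) / t n)
      atTop (𝓝 0) := by
  obtain ⟨C1, hC1⟩ := hl1b
  obtain ⟨C2, hC2⟩ := hl2b
  have hlim : Tendsto (fun n => t n * ((C1 + 1) ^ 2 + (C2 + 1) ^ 2)) atTop (𝓝 0) := by
    simpa using htlim.mul_const ((C1 + 1) ^ 2 + (C2 + 1) ^ 2)
  refine tendsto_of_tendsto_of_tendsto_of_le_of_le' tendsto_const_nhds hlim ?_ ?_
  · refine Eventually.of_forall fun n => ?_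
    exact div_nonneg (Real.iSup_nonneg fun f => by positivity) (ht n).le
  · filter_upwards [hconv1 1 one_pos, hconv2 1 one_pos] with n hn1 hn2
    have htn := ht n
    rw [div_le_iff₀ htn]
    refine ciSup_le fun f => ?_
    have a1 := abs_le.mp (hn1 f)
    have a2 := abs_le.mp (hn2 f)
    have b1 := abs_le.mp (hC1 f)
    have b2 := abs_le.mp (hC2 f)
    have hm : max (θ1 f + t n * h1 n f) 0 ≤ t n * (C1 + 1) := by
      refine max_le ?_ (mul_nonneg htn.le (by linarith))
      have := mul_le_mul_of_nonneg_left (show h1 n f ≤ C1 + 1 by linarith) htn.le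
      linarith [hθ1np f]
    have e1 : (max (θ1 f + t n * h1 n f) 0) ^ 2 ≤ (t n * (C1 + 1)) ^ 2 :=
      pow_le_pow_left₀ (le_max_right _ _) hm 2
    have e2 : (h2 n f) ^ 2 ≤ (C2 + 1) ^ 2 :=
      sq_le_sq' (by linarith) (by linarith)
    have e3 : (t n * h2 n f) ^ 2 ≤ (t n) ^ 2 * (C2 + 1) ^ 2 := by
      rw [mul_pow]
      exact mul_le_mul_of_nonneg_left e2 (sq_nonneg _)
    calc _ ≤ _ := add_le_add e1 e3
      _ = _ := by ring
end

section
/- (Lemma C.3(ii), GMM overidentification functional, second order derivative.) Let Γ ⊂ ℝ^k be compact, W an m×m real symmetric positive definite matrix, and Θ : ℝ^k → ℝ^m continuously differentiable with Jacobian matrix J(γ) ∈ ℝ^{m×k} at γ. Let θ be the restriction of Θ to Γ and define φ(ϑ) = inf_{γ ∈ Γ} ϑ(γ)ᵀ W ϑ(γ) for bounded ϑ : Γ → ℝ^m. Assume: (a) Γ₀ = {γ ∈ Γ : θ(γ) = 0} is nonempty and contained in the interior of Γ; (b) there exist κ ∈ (0,1], C > 0 and ε̄ > 0 such that for every ε ∈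 (0, ε̄] and every γ ∈ Γ with dist(γ, Γ₀) ≥ ε one has ‖θ(γ)‖ ≥ C ε^κ. Then for every sequence t_n ↓ 0 and every sequence of bounded functions h_n : Γ → ℝ^m converging in supremum norm to a continuous function h : Γ → ℝ^m, one has φ(θ + t_n h_n)/t_n² → inf_{γ₀ ∈ Γ₀} inf_{v ∈ ℝ^k} (h(γ₀) − J(γ₀) v)ᵀ W (h(γ₀) − J(γ₀) v). -/
open Filter Topology Matrix

lemma gmm_key {E F : Type*} [NormedAddCommGroup E] [NormedSpace ℝ E]
    [NormedAddCommGroup F] [NormedSpace ℝ F] (Θ : E → F) (J : E →L[ℝ] F) (g v0 : E)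
    (hs : HasStrictFDerivAt Θ J g) (l : Filter ℕ) (t : ℕ → ℝ) (ht : ∀ n, 0 < t n)
    (htl : Tendsto t l (𝓝 0)) (p v : ℕ → E) (hp : Tendsto p l (𝓝 g))
    (hv : Tendsto v l (𝓝 v0)) (hz : ∀ᶠ n in l, Θ (p n) = 0) :
    Tendsto (fun n => (t n)⁻¹ • Θ (p n - t n • v n)) l (𝓝 (-(J v0))) ∧
    Tendsto (fun n => p n - t n • v n) l (𝓝 g) := by
  have h1 : Tendsto (fun n => p n - t n • v n) l (𝓝 g) := by
    simpa using hp.sub (htl.smul hv)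
  refine ⟨?_, h1⟩
  have h2 := hs.isLittleO.comp_tendsto (h1.prodMk_nhds hp)
  have h3 : (fun n => (p n - t n • v n) - p n) =O[l] t := by
    have : (fun n => (p n - t n • v n) - p n) = fun n => t n • (-(v n)) := by
      ext n; simp
    rw [this]
    have := (Asymptotics.isBigO_refl t l).smul (hv.neg.isBigO_one ℝ)
    simpa using this
  have h4 := (h2.trans_isBigO h3).tendsto_inv_smul_nhds_zero
  have h5 : Tendsto (fun n => -(J (v n))) l (𝓝 (-(J v0))) :=
    ((J.continuous.tendsto v0).comp hv).neg
  have h6 := h4.add h5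
  rw [zero_add] at h6
  refine h6.congr' ?_
  filter_upwards [hz] with n hn
  have := (ht n).ne'
  simp [hn, smul_sub, smul_smul, this]

lemma gmm_coercive {m : ℕ} (W : Matrix (Fin m) (Fin m) ℝ) (hWpd : W.PosDef)
    (Q : EuclideanSpace ℝ (Fin m) → ℝ) (hQ : ∀ x, Q x = x ⬝ᵥ W.mulVec x) :
    Continuous Q ∧ (∀ x, 0 ≤ Q x) ∧ (∀ (a : ℝ) x, Q (a • x) = a ^ 2 * Q x) ∧
    ∃ c > 0, ∀ x, c * ‖x‖ ^ 2 ≤ Q x := by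
  have hpos : ∀ x, x ≠ 0 → 0 < Q x := by
    intro x hx
    rw [hQ]
    have := hWpd.dotProduct_mulVec_pos (x := x.ofLp) (by simpa using hx)
    simpa using this
  have hcont : Continuous Q := by
    have : Q = fun x : EuclideanSpace ℝ (Fin m) => x.ofLp ⬝ᵥ W.mulVec x.ofLp := funext hQ
    rw [this]
    unfold dotProduct mulVec dotProduct
    fun_prop
  have hsm : ∀ (a : ℝ) x, Q (a • x) = a ^ 2 * Q x := by
    intro a x
    simp only [hQ]
    simp [mulVec_smul, pow_two, mul_assoc]
  have h0 : Q 0 = 0 := by simp [hQ]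
  refine ⟨hcont, ?_, hsm, ?_⟩
  · intro x
    by_cases hx : x = 0
    · simp [hx, h0]
    · exact (hpos x hx).le
  · by_cases hne : (Metric.sphere (0 : EuclideanSpace ℝ (Fin m)) 1).Nonempty
    · obtain ⟨x0, hx0, hmin⟩ := (isCompact_sphere _ _).exists_isMinOn hne hcont.continuousOn
      have hx0' : x0 ≠ 0 := by
        rintro rfl; simp at hx0
      refine ⟨Q x0, hpos x0 hx0', fun x => ?_⟩
      by_cases hx : x = 0
      · simp [hx, h0]
      · have hnx : ‖x‖ ≠ 0 := by simpa using hx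
        have := hmin (show ‖x‖⁻¹ • x ∈ Metric.sphere (0 : EuclideanSpace ℝ (Fin m)) 1 by
          simp [norm_smul, hnx])
        simp only [Set.mem_ofPred_eq, hsm] at this
        calc Q x0 * ‖x‖ ^ 2 ≤ ((‖x‖⁻¹) ^ 2 * Q x) * ‖x‖ ^ 2 := by gcongr
          _ = Q x := by field_simp
    · refine ⟨1, one_pos, fun x => ?_⟩
      have hx : x = 0 := by
        by_contra hx
        have hnx : ‖x‖ ≠ 0 := by simpa using hx
        exact hne ⟨‖x‖⁻¹ • x, by simp [norm_smul, hnx]⟩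
      simp [hx, h0]

/-- Lemma C.3(ii): second order Hadamard directional derivative of the GMM
overidentification functional `φ(ϑ) = inf_{γ∈Γ} ϑ(γ)ᵀ W ϑ(γ)` at `θ = Θ|_Γ`, where `Θ` is
`C¹` with Jacobian `J(γ) = fderiv ℝ Θ γ`, the zero set `Γ₀` is nonempty and interior to
`Γ`, and an identification bound `‖θ(γ)‖ ≥ C·ε^κ` holds off `ε`-neighborhoods of `Γ₀`:
`φ(θ + t_n h_n)/t_n² → inf_{γ₀∈Γ₀} inf_{v∈ℝ^k} (h(γ₀) − J(γ₀)v)ᵀ W (h(γ₀) − J(γ₀)v)`. -/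
theorem gmm_overid_second_order_hadamard
    (k m : ℕ) (Γ : Set (EuclideanSpace ℝ (Fin k))) (hΓc : IsCompact Γ)
    (W : Matrix (Fin m) (Fin m) ℝ) (hWsymm : W.IsSymm) (hWpd : W.PosDef)
    (Θ : EuclideanSpace ℝ (Fin k) → EuclideanSpace ℝ (Fin m)) (hΘ : ContDiff ℝ 1 Θ)
    (Γ₀ : Set (EuclideanSpace ℝ (Fin k))) (hΓ₀def : Γ₀ = {γ ∈ Γ | Θ γ = 0})
    (hΓ₀ne : Γ₀.Nonempty) (hΓ₀int : Γ₀ ⊆ interior Γ)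
    (κ C εbar : ℝ) (hκ : κ ∈ Set.Ioc (0 : ℝ) 1) (hC : 0 < C) (hεbar : 0 < εbar)
    (hsep : ∀ ε ∈ Set.Ioc (0 : ℝ) εbar, ∀ γ ∈ Γ,
      ε ≤ Metric.infDist γ Γ₀ → C * ε ^ κ ≤ ‖Θ γ‖)
    (t : ℕ → ℝ) (ht : ∀ n, 0 < t n) (htlim : Tendsto t atTop (𝓝 0))
    (hn : ℕ → EuclideanSpace ℝ (Fin k) → EuclideanSpace ℝ (Fin m))
    (h : EuclideanSpace ℝ (Fin k) → EuclideanSpace ℝ (Fin m))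
    (hhnb : ∀ n, ∃ D, ∀ γ ∈ Γ, ‖hn n γ‖ ≤ D) (hhc : ContinuousOn h Γ)
    (hconv : ∀ ε > (0 : ℝ), ∀ᶠ n in atTop, ∀ γ ∈ Γ, ‖hn n γ - h γ‖ ≤ ε) :
    Tendsto (fun n =>
        (⨅ γ : Γ, (Θ (γ : EuclideanSpace ℝ (Fin k)) + t n • hn n γ) ⬝ᵥ
            W.mulVec (Θ (γ : EuclideanSpace ℝ (Fin k)) + t n • hn n γ)) / (t n) ^ 2)
      atTop
      (𝓝 (⨅ γ₀ : Γ₀, ⨅ v : EuclideanSpace ℝ (Fin k),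
            (h (γ₀ : EuclideanSpace ℝ (Fin k)) - fderiv ℝ Θ γ₀ v) ⬝ᵥ
              W.mulVec (h (γ₀ : EuclideanSpace ℝ (Fin k)) - fderiv ℝ Θ γ₀ v))) := by
  obtain ⟨Q, hQ⟩ : ∃ Q : EuclideanSpace ℝ (Fin m) → ℝ, ∀ x, Q x = x ⬝ᵥ W.mulVec x :=
    ⟨_, fun _ => rfl⟩
  obtain ⟨hQc, hQ0, hQs, c, hc, hcQ⟩ := gmm_coercive W hWpd Q hQ
  have hΓ₀Γ : Γ₀ ⊆ Γ := by rw [hΓ₀def]; exact fun x hx => hx.1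
  have hΓ₀z : ∀ x ∈ Γ₀, Θ x = 0 := by rw [hΓ₀def]; exact fun x hx => hx.2
  have hΓ₀c : IsCompact Γ₀ := by
    rw [hΓ₀def]
    exact hΓc.inter_right (isClosed_eq hΘ.continuous continuous_const)
  have hstrict : ∀ x, HasStrictFDerivAt Θ (fderiv ℝ Θ x) x := fun x =>
    hΘ.contDiffAt.hasStrictFDerivAt one_ne_zero
  have hne : Nonempty Γ₀ := hΓ₀ne.to_subtype
  have hneΓ : Nonempty Γ := (hΓ₀ne.mono hΓ₀Γ).to_subtype
  -- rewrite in terms of Q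
  have e1 : ∀ n, (⨅ γ : Γ, (Θ (γ : EuclideanSpace ℝ (Fin k)) + t n • hn n γ) ⬝ᵥ
            W.mulVec (Θ (γ : EuclideanSpace ℝ (Fin k)) + t n • hn n γ)) / (t n) ^ 2
      = ⨅ γ : Γ, Q ((t n)⁻¹ • Θ γ + hn n γ) := by
    intro n
    have htn := (ht n).ne'
    rw [div_eq_mul_inv, Real.iInf_mul_of_nonneg (by positivity)]
    congr 1
    ext γ
    have e : Θ γ + t n • hn n γ = t n • ((t n)⁻¹ • Θ γ + hn n γ) := by
      rw [smul_add, smul_smul, mul_inv_cancel₀ htn, one_smul]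
    have e' := hQ (Θ γ + t n • hn n γ)
    rw [e, hQs] at e'
    have : Q ((t n)⁻¹ • Θ γ + hn n γ)
        = (t n ^ 2 * Q ((t n)⁻¹ • Θ γ + hn n γ)) * (t n ^ 2)⁻¹ := by field_simp
    rw [this, e', ← e]
    rfl
  have e2 : (⨅ γ₀ : Γ₀, ⨅ v : EuclideanSpace ℝ (Fin k),
            (h (γ₀ : EuclideanSpace ℝ (Fin k)) - fderiv ℝ Θ γ₀ v) ⬝ᵥ
              W.mulVec (h (γ₀ : EuclideanSpace ℝ (Fin k)) - fderiv ℝ Θ γ₀ v))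
      = ⨅ γ₀ : Γ₀, ⨅ v : EuclideanSpace ℝ (Fin k), Q (h γ₀ - fderiv ℝ Θ γ₀ v) := by
    simp only [hQ]
    rfl
  simp only [e1]
  rw [e2]
  have hbb : ∀ n, BddBelow (Set.range fun γ : Γ => Q ((t n)⁻¹ • Θ γ + hn n γ)) := fun n =>
    ⟨0, by rintro _ ⟨γ, rfl⟩; exact hQ0 _⟩
  have hbb2 : ∀ γ₀ : Γ₀, BddBelow (Set.range fun v : EuclideanSpace ℝ (Fin k) =>
      Q (h γ₀ - fderiv ℝ Θ γ₀ v)) := fun n =>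
    ⟨0, by rintro _ ⟨γ, rfl⟩; exact hQ0 _⟩
  have hbb3 : BddBelow (Set.range fun γ₀ : Γ₀ => ⨅ v : EuclideanSpace ℝ (Fin k),
      Q (h γ₀ - fderiv ℝ Θ γ₀ v)) :=
    ⟨0, by rintro _ ⟨γ, rfl⟩; exact Real.iInf_nonneg fun _ => hQ0 _⟩
  set L := ⨅ γ₀ : Γ₀, ⨅ v : EuclideanSpace ℝ (Fin k), Q (h γ₀ - fderiv ℝ Θ γ₀ v) with hL
  have hLle : ∀ γ₀ ∈ Γ₀, ∀ v, L ≤ Q (h γ₀ - fderiv ℝ Θ γ₀ v) := fun γ₀ hγ₀ v =>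
    (ciInf_le hbb3 ⟨γ₀, hγ₀⟩).trans (ciInf_le (hbb2 ⟨γ₀, hγ₀⟩) v)
  -- main convergence along filters
  have hmain : ∀ (l : Filter ℕ), l ≤ atTop → ∀ (p v : ℕ → EuclideanSpace ℝ (Fin k)) (g v0),
      g ∈ Γ₀ → Tendsto p l (𝓝 g) → Tendsto v l (𝓝 v0) → (∀ᶠ n in l, p n ∈ Γ₀) →
      (∀ᶠ n in l, p n - t n • v n ∈ Γ) →
      Tendsto (fun n => Q ((t n)⁻¹ • Θ (p n - t n • v n) + hn n (p n - t n • v n))) l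
        (𝓝 (Q (h g - fderiv ℝ Θ g v0))) := by
    intro l hl p v g v0 hg hp hv hpΓ hγΓ
    obtain ⟨k1, k2⟩ := gmm_key Θ _ g v0 (hstrict g) l t ht (htlim.mono_left hl) p v hp hv
      (hpΓ.mono fun n hn => hΓ₀z _ hn)
    have k3 : Tendsto (fun n => h (p n - t n • v n)) l (𝓝 (h g)) :=
      (hhc g (hΓ₀Γ hg)).tendsto.comp (tendsto_nhdsWithin_iff.2 ⟨k2, hγΓ⟩)
    have k4 : Tendsto (fun n => hn n (p n - t n • v n) - h (p n - t n • v n)) l (𝓝 0) := by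
      rw [Metric.tendsto_nhds]
      intro ε hε
      filter_upwards [hl (hconv (ε / 2) (half_pos hε)), hγΓ] with n h1 h2
      rw [dist_zero_right]
      have := h1 _ h2
      linarith
    have k5 : Tendsto (fun n => (t n)⁻¹ • Θ (p n - t n • v n) + hn n (p n - t n • v n)) l
        (𝓝 (h g - fderiv ℝ Θ g v0)) := by
      have := k1.add (k3.add k4)
      rw [add_zero, neg_add_eq_sub] at this
      refine this.congr fun n => ?_
      simp
    exact (hQc.tendsto _).comp k5
  obtain ⟨H, hH⟩ := hΓc.exists_bound_of_continuousOn hhc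
  refine tendsto_order.2 ⟨fun a ha => ?_, fun a ha => ?_⟩
  · -- lower bound
    obtain ⟨b, hab, hbL⟩ := exists_between ha
    suffices hs : ∀ᶠ n in atTop, ∀ γ ∈ Γ, b ≤ Q ((t n)⁻¹ • Θ γ + hn n γ) by
      filter_upwards [hs] with n hs
      exact hab.trans_le (le_ciInf fun γ => hs γ γ.2)
    by_contra hcon
    have hfr : ∃ᶠ n in atTop, ∃ γ ∈ Γ, Q ((t n)⁻¹ • Θ γ + hn n γ) < b := by
      intro hh
      apply hcon
      filter_upwards [hh] with n hh γ hγ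
      by_contra hlt
      exact hh ⟨γ, hγ, not_le.1 hlt⟩
    have hnb : (atTop ⊓ 𝓟 {n | ∃ γ ∈ Γ, Q ((t n)⁻¹ • Θ γ + hn n γ) < b}).NeBot :=
      frequently_mem_iff_neBot.1 hfr
    obtain ⟨U, hU⟩ := Ultrafilter.exists_le
      (atTop ⊓ 𝓟 {n | ∃ γ ∈ Γ, Q ((t n)⁻¹ • Θ γ + hn n γ) < b})
    have hUat : (U : Filter ℕ) ≤ atTop := hU.trans inf_le_left
    have hUS : ∀ᶠ n in (U : Filter ℕ), ∃ γ ∈ Γ, Q ((t n)⁻¹ • Θ γ + hn n γ) < b :=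
      (hU.trans inf_le_right) (mem_principal_self _)
    choose! γ hγ using (fun n (hn : ∃ γ ∈ Γ, Q ((t n)⁻¹ • Θ γ + hn n γ) < b) => hn)
    have hγU : ∀ᶠ n in (U : Filter ℕ), γ n ∈ Γ ∧ Q ((t n)⁻¹ • Θ (γ n) + hn n (γ n)) < b :=
      hUS.mono fun n hn => hγ n hn
    choose p hpΓ hpd using fun n => hΓ₀c.exists_infDist_eq_dist hΓ₀ne (γ n)
    obtain ⟨R, hR0, hR⟩ : ∃ R : ℝ, 0 ≤ R ∧ ∀ x, Q x < b → ‖x‖ ≤ R := by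
      refine ⟨√(b / c), Real.sqrt_nonneg _, fun x hx => Real.le_sqrt_of_sq_le ?_⟩
      rw [le_div_iff₀ hc]
      linarith [hcQ x]
    set K := R + (|H| + 1) with hK
    have hΘb : ∀ᶠ n in (U : Filter ℕ), ‖Θ (γ n)‖ ≤ t n * K := by
      filter_upwards [hγU, hUat (hconv 1 one_pos)] with n h1 h2
      have a1 := hR _ h1.2
      have a2 := h2 _ h1.1
      have a3 := hH _ h1.1
      have a4 : ‖(t n)⁻¹ • Θ (γ n)‖ ≤ K := by
        have e : (t n)⁻¹ • Θ (γ n) = ((t n)⁻¹ • Θ (γ n) + hn n (γ n))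
          - ((hn n (γ n) - h (γ n)) + h (γ n)) := by simp
        rw [e]
        refine (norm_sub_le _ _).trans ?_
        have := norm_add_le (hn n (γ n) - h (γ n)) (h (γ n))
        have := le_abs_self H
        linarith
      rw [norm_smul, norm_inv, Real.norm_of_nonneg (ht n).le, inv_mul_le_iff₀ (ht n)] at a4
      exact a4
    have hsmall : ∀ᶠ n in (U : Filter ℕ), t n * K < C * min εbar 1 := by
      have : Tendsto (fun n => t n * K) U (𝓝 (0 * K)) :=
        (htlim.mono_left hUat).mul_const K
      rw [zero_mul] at this
      exact this.eventually_lt_const (by positivity)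
    have hdist : ∀ᶠ n in (U : Filter ℕ), ‖p n - γ n‖ ≤ t n * (K / C) := by
      filter_upwards [hΘb, hsmall, hγU] with n h1 h2 h3
      rw [← dist_eq_norm, dist_comm, ← hpd]
      set d := Metric.infDist (γ n) Γ₀
      have hKn : 0 ≤ t n * K := (norm_nonneg _).trans h1
      rw [← mul_div_assoc, le_div_iff₀ hC]
      by_cases hd : d ≤ 0
      · nlinarith
      push Not at hd
      have hδ : 0 < min d (min εbar 1) := by positivity
      have b1 := hsep (min d (min εbar 1)) ⟨hδ, (min_le_right _ _).trans (min_le_left _ _)⟩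
        (γ n) h3.1 (min_le_left _ _)
      have b2 : min d (min εbar 1) ≤ (min d (min εbar 1)) ^ κ := by
        conv_lhs => rw [← Real.rpow_one (min d (min εbar 1))]
        exact Real.rpow_le_rpow_of_exponent_ge hδ
          ((min_le_right _ _).trans (min_le_right _ _)) hκ.2
      have b3 : C * min d (min εbar 1) ≤ t n * K :=
        (mul_le_mul_of_nonneg_left b2 hC.le).trans (b1.trans h1)
      rcases min_choice d (min εbar 1) with hm | hm
      · rw [hm] at b3; linarith
      · rw [hm] at b3; linarith
    set v : ℕ → EuclideanSpace ℝ (Fin k) := fun n => (t n)⁻¹ • (p n - γ n) with hv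
    have hγv : ∀ n, p n - t n • v n = γ n := by
      intro n
      simp [hv, smul_smul, (ht n).ne']
    have hvb : ∀ᶠ n in (U : Filter ℕ), v n ∈ Metric.closedBall (0 : EuclideanSpace ℝ (Fin k)) (K / C) := by
      filter_upwards [hdist] with n h1
      rw [mem_closedBall_zero_iff, norm_smul, norm_inv, Real.norm_of_nonneg (ht n).le,
        inv_mul_le_iff₀ (ht n)]
      exact h1
    obtain ⟨g, hg, hpg⟩ := hΓ₀c.ultrafilter_le_nhds (U.map p)
      (by
        rw [le_principal_iff]
        have hev : ∀ᶠ n in (U : Filter ℕ), p n ∈ Γ₀ := Eventually.of_forall hpΓ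
        exact hev)
    obtain ⟨v0, -, hvv⟩ := (isCompact_closedBall (0 : EuclideanSpace ℝ (Fin k))
      (K / C)).ultrafilter_le_nhds (U.map v) (by rw [le_principal_iff]; exact hvb)
    have hlim := hmain U hUat p v g v0 hg hpg hvv (Eventually.of_forall hpΓ)
      (by simp only [hγv]; exact hγU.mono fun n hn => hn.1)
    simp only [hγv] at hlim
    have := le_of_tendsto hlim (hγU.mono fun n hn => hn.2.le)
    linarith [hLle g hg v0]
  · -- upper bound
    obtain ⟨g, hg⟩ := exists_lt_of_ciInf_lt ha
    obtain ⟨v, hv⟩ := exists_lt_of_ciInf_lt hg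
    have hmem : ∀ᶠ n in atTop, (g : EuclideanSpace ℝ (Fin k)) - t n • v ∈ Γ := by
      have : Tendsto (fun n => (g : EuclideanSpace ℝ (Fin k)) - t n • v) atTop (𝓝 g) := by
        simpa using tendsto_const_nhds.sub (htlim.smul_const v)
      exact this (mem_interior_iff_mem_nhds.1 (hΓ₀int g.2))
    have hlim := hmain atTop le_rfl (fun _ => g) (fun _ => v) g v g.2 tendsto_const_nhds
      tendsto_const_nhds (Eventually.of_forall fun _ => g.2) hmem
    filter_upwards [hlim.eventually_lt_const hv, hmem] with n h1 h2
    exact (ciInf_le (hbb n) ⟨_, h2⟩).trans_lt h1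
end
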